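/- For every integer k ≥ 1, GR_k(P_8) = 3k + 5. -/

import Mathlib

/-!
**Lower bound.** Give the first seven vertices the label `0`, then three vertices each of the labels
`1, …, k - 1`, and color an edge by the larger label of its ends. This is a Gallai coloring of
`K_{3k+4}`. Color `0` lives on seven vertices, and in a color `i ≥ 1` every edge meets the three
vertices labelled `i`, while `P₈` has four disjoint edges (`lower`).

**Upper bound.** The induction needs different path lengths in different colors. `forces`: if
`m j ≤ 3` for every color `j` and `|S| ≥ max m + 2 + ∑ m`, then some color `j` has a path on
`2 * m j + 2` vertices in `S`. The case `m = 3` is the theorem. The proof is by induction on `∑ m`.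

By Gallai's theorem (`exists_cut`) some two colors `r`, `b` (red and blue) cover all the edges
between a nonempty proper subset of `S` and its complement; equivalently, the edges in the other,
*third* colors do not connect `S`. Call the components of the third-colored edges *parts*; a
vertex outside a part is joined to the whole part in one color.

* If a vertex set `A` is joined to each outside vertex in one color, and in each color `j` to at
  most `m j` of them, then the induction hypothesis with each `m j` lowered accordingly gives a
  path in `A`, and the outside vertices can be woven into it (`extend`, `reduce`). This settles the
  case of a cut in a single color (`of_cut_mono`), the smaller side of which either is small enough,
  or gives an alternating path directly.
* Suppose there is no cut in a single color. If a part `A` has at least `m r` and `m b` vertices,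
  then either the previous argument applies or, say, more than `m r` vertices are red to `A`, and
  an alternating red path with one additional edge is long enough (`path_of_homog`). So every part
  has fewer than `max (m r) (m b) ≤ 3` vertices: the third-colored edges form a matching, which is
  empty unless `max (m r) (m b) = 3`.
* Let `m b ≤ m r`. Induction with `m r` lowered by one gives a red path on `2 * m r` vertices.
  Take such a path on `t ∈ {2 * m r, 2 * m r + 1}` vertices that has no red path on `t + 1`
  vertices. Outside vertices send no red edge to its ends `p`, `q` and no two red edges to
  consecutive vertices, so up to the few third-colored edges they are blue to `p`, `q` and to at
  least one interior vertex, two if `t ≥ 6` (`exists_skeleton`). Counting blue edges into the interior gives a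
  blue path on `2 * m b + 2` vertices (`Skeleton.conclude`).
-/

/-- A Gallai coloring: an edge coloring of the complete graph on `Fin N` with colors
from `Fin k` containing no rainbow triangle. -/
def IsGallai {N k : ℕ} (c : Sym2 (Fin N) → Fin k) : Prop :=
  ∀ x y z : Fin N, x ≠ y → y ≠ z → x ≠ z →
    c s(x, y) = c s(y, z) ∨ c s(y, z) = c s(x, z) ∨ c s(x, y) = c s(x, z)

/-- The coloring `c` of the complete graph on `Fin N` contains a copy of the graph `H`
all of whose edges have color `i`. -/
def HasMonoCopy {N k V : ℕ} (c : Sym2 (Fin N) → Fin k)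
    (H : SimpleGraph (Fin V)) (i : Fin k) : Prop :=
  ∃ f : Fin V → Fin N, Function.Injective f ∧ ∀ u v, H.Adj u v → c s(f u, f v) = i

/-- Every Gallai k-coloring of the complete graph on `N` vertices contains a
monochromatic copy of `(H i)` in color `i` for some color `i`. -/
def GallaiRamseyProp {k : ℕ} (H : Fin k → Σ V : ℕ, SimpleGraph (Fin V)) (N : ℕ) : Prop :=
  ∀ c : Sym2 (Fin N) → Fin k, IsGallai c → ∃ i : Fin k, HasMonoCopy c (H i).2 i

/-- The matching of size `n`: the graph on `2n` vertices consisting of `n` pairwise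
vertex-disjoint edges. -/
def matchingGraph (n : ℕ) : SimpleGraph (Fin (2 * n)) :=
  SimpleGraph.fromRel (fun u v => (u : ℕ) / 2 = (v : ℕ) / 2)

section
set_option linter.unusedSectionVars false
set_option linter.style.longLine false

variable {V κ : Type*} [DecidableEq V]

/-- `S` contains a path on `n` vertices with all edges of color `j`, given as the list of its
vertices. -/
def MonoPath (c : V → V → κ) (S : Finset V) (j : κ) (n : ℕ) : Prop :=
  ∃ l : List V, l.length = n ∧ l.Nodup ∧ (∀ x ∈ l, x ∈ S) ∧ l.IsChain (fun x y => c x y = j)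

/-- `S` has a nonempty proper subset all of whose edges to its complement in `S` have color `r`
or `b`. Taking `r = b` expresses a cut in a single color. -/
def Cut (c : V → V → κ) (S : Finset V) (r b : κ) : Prop :=
  ∃ K ⊆ S, K.Nonempty ∧ (S \ K).Nonempty ∧ ∀ x ∈ K, ∀ y ∈ S \ K, c x y = r ∨ c x y = b

/-- The coloring has no rainbow triangle. Diagonal values `c x x` are never constrained. -/
def NoRainbow (c : V → V → κ) : Prop :=
  ∀ x y z : V, x ≠ y → y ≠ z → x ≠ z → c x y = c y z ∨ c y z = c x z ∨ c x y = c x z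

/-- `x y` is an edge inside `S` whose color is neither `r` nor `b`. -/
def Third (c : V → V → κ) (S : Finset V) (r b : κ) (x y : V) : Prop :=
  x ∈ S ∧ y ∈ S ∧ x ≠ y ∧ c x y ≠ r ∧ c x y ≠ b

open Classical in
/-- The connected component of `x` in the graph of the edges of `S` colored neither `r` nor `b`. -/
noncomputable def part (c : V → V → κ) (S : Finset V) (r b : κ) (x : V) : Finset V :=
  S.filter (Relation.ReflTransGen (Third c S r b) x)

/-! ### Parts and Gallai cuts -/

variable {c : V → V → κ} {S : Finset V} {r b j : κ}

lemma MonoPath.mono {A : Finset V} {n : ℕ} (h : MonoPath c A j n) (hA : A ⊆ S) :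
    MonoPath c S j n := by
  obtain ⟨l, h1, h2, h3, h4⟩ := h
  exact ⟨l, h1, h2, fun x hx => hA (h3 x hx), h4⟩

lemma monoPath_two {x y : V} (hx : x ∈ S) (hy : y ∈ S) (hxy : x ≠ y) :
    MonoPath c S (c x y) 2 :=
  ⟨[x, y], rfl, by simp [hxy], by simp [hx, hy], by simp⟩

lemma part_subset (x : V) : part c S r b x ⊆ S := by
  classical
  exact Finset.filter_subset _ _

lemma self_mem_part {x : V} (hx : x ∈ S) : x ∈ part c S r b x := by
  classical
  simp [part, hx, Relation.ReflTransGen.refl]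

lemma part_cross {x y z : V} (hy : y ∈ part c S r b x) (hz : z ∈ S)
    (hz' : z ∉ part c S r b x) : c y z = r ∨ c y z = b := by
  classical
  simp only [part, Finset.mem_filter, not_and] at hy hz'
  by_contra! h
  refine hz' hz (hy.2.tail ⟨hy.1, hz, ?_, h.1, h.2⟩)
  rintro rfl
  exact hz' hz hy.2

lemma third_mem_part {x y : V} (h : Third c S r b x y) : y ∈ part c S r b x := by
  classical
  simp only [part, Finset.mem_filter]
  exact ⟨h.2.1, .single h⟩

/-- A vertex outside a part is joined to the whole part in one color: along a third-colored edge
`u w` of the part, the triangle on `u`, `w`, `z` forces `c u z = c w z`. -/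
lemma part_homog (hg : NoRainbow c) {x y z : V} (hy : y ∈ part c S r b x)
    (hz : z ∈ S) (hz' : z ∉ part c S r b x) : c y z = c x z := by
  classical
  have hy2 : Relation.ReflTransGen (Third c S r b) x y := by
    simp only [part, Finset.mem_filter] at hy; exact hy.2
  induction hy2 with
  | refl => rfl
  | @tail u w hu huw ih =>
    have hum : u ∈ part c S r b x := by
      simp only [part, Finset.mem_filter]; exact ⟨huw.1, hu⟩
    have h1 := ih hum
    have h2 := part_cross hum hz hz'
    have h3 := part_cross hy hz hz'
    have hzu : u ≠ z := by rintro rfl; exact hz' hum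
    have hzw : w ≠ z := by rintro rfl; exact hz' hy
    have h4 := hg u w z huw.2.2.1 hzw hzu
    have := huw.2.2.2
    grind

lemma part_symm (hs : ∀ x y, c x y = c y x) {x y : V} (hx : x ∈ S)
    (hy : y ∈ part c S r b x) : x ∈ part c S r b y := by
  classical
  simp only [part, Finset.mem_filter] at hy ⊢
  refine ⟨hx, ?_⟩
  have hsym : Std.Symm (Third c S r b) := ⟨fun u w h => ?_⟩
  · exact Relation.ReflTransGen.stdSymm.symm _ _ hy.2
  exact ⟨h.2.1, h.1, h.2.2.1.symm, by rw [hs]; exact h.2.2.2.1, by rw [hs]; exact h.2.2.2.2⟩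

lemma part_subset_of_cut (hs : ∀ x y, c x y = c y x) {K : Finset V}
    (hc : ∀ x ∈ K, ∀ y ∈ S \ K, c x y = r ∨ c x y = b) {x y : V}
    (hy : y ∈ part c S r b x) : x ∈ K ↔ y ∈ K := by
  classical
  simp only [part, Finset.mem_filter] at hy
  obtain ⟨-, hy⟩ := hy
  induction hy with
  | refl => rfl
  | @tail u w hu huw ih =>
    rw [ih]
    have h1 := hc u
    have h2 := hc w
    obtain ⟨hu, hw, hne, h3, h4⟩ := huw
    have := hs u w
    simp only [Finset.mem_sdiff] at h1 h2
    grind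

lemma Cut.exists_not_mem_part (hs : ∀ x y, c x y = c y x) (h : Cut c S r b) (x : V) :
    ∃ z ∈ S, z ∉ part c S r b x := by
  obtain ⟨K, hK, ⟨u, hu⟩, ⟨w, hw⟩, hc⟩ := h
  rw [Finset.mem_sdiff] at hw
  by_contra! hall
  have h1 := part_subset_of_cut hs hc (hall u (hK hu))
  have h2 := part_subset_of_cut hs hc (hall w hw.1)
  tauto

/-- If `v` and the part of `x` are joined to the remaining vertices in colors `r'` and `b'` only,
then these remaining vertices are one side of a cut of `insert v S`. -/
lemma cut_insert_part (hs : ∀ x y, c x y = c y x) {v x : V} {r' b' : κ} (hv : v ∉ S)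
    (hz : ∃ z ∈ S, z ∉ part c S r b x)
    (h1 : ∀ y ∈ part c S r b x, ∀ z ∈ S, z ∉ part c S r b x → c y z = r' ∨ c y z = b')
    (h2 : ∀ z ∈ S, z ∉ part c S r b x → c v z = r' ∨ c v z = b') :
    Cut c (insert v S) r' b' := by
  obtain ⟨z, hz, hz'⟩ := hz
  refine ⟨S \ part c S r b x, ?_, ⟨z, by simp [hz, hz']⟩, ⟨v, by simp [hv]⟩, ?_⟩
  · exact Finset.sdiff_subset.trans (Finset.subset_insert _ _)
  · intro u hu w hw
    rw [hs]
    simp only [Finset.mem_sdiff, Finset.mem_insert] at hu hw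
    by_cases hwv : w = v
    · subst hwv; exact h2 u hu.1 hu.2
    · exact h1 w (by tauto) u hu.1 hu.2

lemma cut_singleton {v : V} (hv : v ∉ S) (hS : S.Nonempty) {r' b' : κ}
    (h : ∀ z ∈ S, c v z = r' ∨ c v z = b') : Cut c (insert v S) r' b' := by
  refine ⟨{v}, by simp, by simp, ?_, ?_⟩
  · obtain ⟨z, hz⟩ := hS
    exact ⟨z, by simp [hz]; rintro rfl; exact hv hz⟩
  · intro x hx y hy
    simp only [Finset.mem_singleton] at hx
    subst hx
    simp only [Finset.mem_sdiff, Finset.mem_insert, Finset.mem_singleton] at hy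
    exact h y (by tauto)

/-- Gallai's theorem, in the form that some two colors cover all the edges across some cut. The
proof adds the vertices one at a time; all candidate cuts of `insert v S` come from parts of the cut
of `S` or have `{v}` as a side. -/
lemma exists_cut (hs : ∀ x y, c x y = c y x) (hg : NoRainbow c) (S : Finset V) (hS : 2 ≤ S.card) :
    ∃ r b, Cut c S r b := by
  induction S using Finset.induction_on with
  | empty => simp at hS
  | @insert v S hv ih =>
    rw [Finset.card_insert_of_notMem hv] at hS
    have hne : S.Nonempty := by rw [← Finset.card_pos]; omega
    have hvS : ∀ z ∈ S, v ≠ z := by rintro z hz rfl; exact hv hz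
    rcases Nat.lt_or_ge S.card 2 with h1 | h1
    · obtain ⟨x, rfl⟩ := Finset.card_eq_one.1 (show S.card = 1 by omega)
      exact ⟨c v x, c v x, cut_singleton hv hne (by simp)⟩
    by_cases hmono : ∃ r, Cut c S r r
    -- If `S` has a cut in the single color `r`, then `v` has neighbours `x₁`, `x₂` in two distinct
    -- colors other than `r`. They lie in one part, outside of which `v` only sends color `r`.
    · obtain ⟨r, hr⟩ := hmono
      by_contra! hno
      have hstar := fun g => mt (cut_singleton (c := c) hv hne (r' := r) (b' := g)) (hno r g)
      push Not at hstar
      obtain ⟨x₁, hx₁, h₁, -⟩ := hstar r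
      obtain ⟨x₂, hx₂, h₂, h₂'⟩ := hstar (c v x₁)
      have hx12 : x₁ ≠ x₂ := by rintro rfl; exact h₂' rfl
      have hmem : x₂ ∈ part c S r r x₁ := by
        by_contra hx
        have h3 := part_cross (self_mem_part hx₁) hx₂ hx
        have := hg v x₁ x₂ (hvS _ hx₁) hx12 (hvS _ hx₂)
        grind
      refine hno r r (cut_insert_part hs hv (hr.exists_not_mem_part hs x₁)
        (fun y hy z hz hz' => part_cross hy hz hz') ?_)
      intro z hz hz'
      have h3 := part_cross (self_mem_part hx₁) hz hz'
      have h4 := part_cross hmem hz hz'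
      have h5 := hg v x₁ z (hvS _ hx₁) (by rintro rfl; exact hz' (self_mem_part hx₁)) (hvS _ hz)
      have h6 := hg v x₂ z (hvS _ hx₂) (by rintro rfl; exact hz' hmem) (hvS _ hz)
      grind
    -- Otherwise all third-colored edges at `v` share the color `c v x`, and every part contains a
    -- neighbour of `v` in this color. If `v z` has another color, then the part of `z` is joined to
    -- everything outside it in the color of `v z`, a cut in a single color.
    · push Not at hmono
      obtain ⟨r, b, hrb⟩ := ih h1
      by_contra! hno
      have hstar := fun g h => mt (cut_singleton (c := c) hv hne (r' := g) (b' := h)) (hno g h)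
      push Not at hstar
      obtain ⟨x, hx, hxr, hxb⟩ := hstar r b
      have hC := mt (cut_insert_part hs hv (hrb.exists_not_mem_part hs x)
        (fun y hy z hz hz' => part_cross hy hz hz')) (hno r b)
      push Not at hC
      obtain ⟨y, hy, hy', hyr, hyb⟩ := hC
      have hxy : c v x = c v y := by
        have h3 := part_cross (self_mem_part hx) hy hy'
        have := hg v x y (hvS _ hx) (by rintro rfl; exact hy' (self_mem_part hx)) (hvS _ hy)
        grind
      have hall : ∀ z ∈ S, c v z ≠ r → c v z ≠ b → c v z = c v x := by
        intro z hz hzr hzb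
        by_cases hzC : z ∈ part c S r b x
        · have h3 := part_cross hzC hy hy'
          have := hg v z y (hvS _ hz) (by rintro rfl; exact hy' hzC) (hvS _ hy)
          grind
        · have h3 := part_cross (self_mem_part hx) hz hzC
          have := hg v x z (hvS _ hx) (by rintro rfl; exact hzC (self_mem_part hx)) (hvS _ hz)
          grind
      obtain ⟨z, hz, hzg, -⟩ := hstar (c v x) (c v x)
      have hzrb : c v z = r ∨ c v z = b := by
        by_contra! h; exact hzg (hall z hz h.1 h.2)
      refine hmono (c v z) ⟨part c S r b z, part_subset z, ⟨z, self_mem_part hz⟩, ?_, ?_⟩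
      · obtain ⟨w, hw, hw'⟩ := hrb.exists_not_mem_part hs z
        exact ⟨w, by simp [hw, hw']⟩
      intro z' hz' w hw
      rw [Finset.mem_sdiff] at hw
      obtain ⟨w', hw', hww⟩ : ∃ w' ∈ part c S r b w, c v w' = c v x := by
        by_contra! hcon
        refine hno r b ⟨part c S r b w, (part_subset w).trans (Finset.subset_insert _ _),
          ⟨w, self_mem_part hw.1⟩, ⟨v, ?_⟩, ?_⟩
        · simp only [Finset.mem_sdiff, Finset.mem_insert, true_or, true_and]
          exact fun h => hv (part_subset _ h)
        · intro u hu t ht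
          simp only [Finset.mem_sdiff, Finset.mem_insert] at ht
          rcases ht with ⟨rfl | ht, ht'⟩
          · rw [hs]
            by_contra! h
            exact hcon u hu (hall u (part_subset _ hu) h.1 h.2)
          · exact part_cross hu ht ht'
      have hzw : z ∉ part c S r b w := fun h => hw.2 (part_symm hs hw.1 h)
      have h3 := part_cross hw' hz hzw
      have h4 := part_homog hg hw' hz hzw
      have h5 := part_homog hg hz' hw.1 hw.2
      have h6 := hg v w' z (hvS _ (part_subset _ hw')) (by rintro rfl; exact hzw hw') (hvS _ hz)
      have h7 := hs z w
      left
      grind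

/-! ### Extending a path across a monochromatic bipartite graph -/

/-- If all `A`–`R` edges have color `j`, a `j`-colored path `l` avoiding `R` and starting in `A` can
be prolonged by two vertices, one of `A` and one of `R`, for each vertex of `R`. -/
lemma extend (hs : ∀ x y, c x y = c y x) {A : Finset V} (R : Finset V) (l : List V) (hn : l.Nodup)
    (hch : l.IsChain (fun x y => c x y = j)) (hl : ∀ x ∈ l, x ∈ S) (hA : A ⊆ S) (hR : R ⊆ S)
    (hAR : ∀ x ∈ A, ∀ y ∈ R, c x y = j) (hd : Disjoint A R) (hRl : ∀ x ∈ l, x ∉ R)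
    (hhead : ∀ x ∈ l.head?, x ∈ A) (hcard : R.card ≤ (A \ l.toFinset).card) :
    MonoPath c S j (l.length + 2 * R.card) := by
  induction R using Finset.induction_on generalizing l with
  | empty => exact ⟨l, by simp, hn, hl, hch⟩
  | @insert ρ R hρ ih =>
    rw [Finset.card_insert_of_notMem hρ] at hcard ⊢
    obtain ⟨a, ha⟩ : (A \ l.toFinset).Nonempty := by rw [← Finset.card_pos]; omega
    have ha2 := ha
    simp only [Finset.mem_sdiff, List.mem_toFinset] at ha2
    have haR : a ∉ insert ρ R := Finset.disjoint_left.1 hd ha2.1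
    have hρA : ρ ∉ A := fun h => Finset.disjoint_left.1 hd h (by simp)
    have hρl : ρ ∉ l := fun h => hRl ρ h (by simp)
    have hsub : R ⊆ insert ρ R := Finset.subset_insert _ _
    have key := ih (a :: ρ :: l) ?_ ?_ ?_ (hsub.trans hR) (fun x hx y hy => hAR x hx y (hsub hy))
      (hd.mono_right hsub) ?_ ?_ ?_
    · convert key using 1
      simp; ring
    · simp only [Finset.mem_insert, not_or] at haR
      simp [hn, hρl, ha2.2, haR.1]
    · rw [List.isChain_cons_cons]
      refine ⟨hAR a ha2.1 ρ (by simp), ?_⟩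
      rw [List.isChain_cons]
      refine ⟨fun y hy => ?_, hch⟩
      rw [hs]; exact hAR y (hhead y hy) ρ (by simp)
    · intro x hx
      simp only [List.mem_cons] at hx
      rcases hx with rfl | rfl | hx
      · exact hA ha2.1
      · exact hR (by simp)
      · exact hl x hx
    · intro x hx
      simp only [List.mem_cons] at hx
      rcases hx with rfl | rfl | hx
      · exact fun h => haR (hsub h)
      · exact hρ
      · exact fun h => hRl x hx (hsub h)
    · simp [ha2.1]
    · have : A \ (a :: ρ :: l).toFinset = (A \ l.toFinset).erase a := by
        ext x
        simp only [Finset.mem_sdiff, List.mem_toFinset, List.mem_cons, Finset.mem_erase]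
        constructor
        · tauto
        · rintro ⟨h1, h2, h3⟩
          refine ⟨h2, ?_⟩
          rintro (h | rfl | h)
          · exact h1 h
          · exact hρA h2
          · exact h3 h
      rw [this, Finset.card_erase_of_mem ha]
      omega


/-! ### The skeleton of a longest path

The next three lemmas express that a path on `t` vertices cannot be prolonged by inserting an outside
vertex `y` between two consecutive vertices, before the first, or after the last one. -/

lemma not_insert (hs : ∀ x y, c x y = c y x) (l₁ l₂ : List V) {x x' y : V} {t : ℕ}
    (hno : ¬ MonoPath c S r (t + 1)) (hlen : (l₁ ++ x :: x' :: l₂).length = t)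
    (hn : (l₁ ++ x :: x' :: l₂).Nodup) (hl : ∀ z ∈ l₁ ++ x :: x' :: l₂, z ∈ S)
    (hch : (l₁ ++ x :: x' :: l₂).IsChain (fun x y => c x y = r))
    (hy : y ∈ S) (hyl : y ∉ l₁ ++ x :: x' :: l₂) : c y x = r → c y x' ≠ r := by
  intro h1 h2
  apply hno
  refine ⟨l₁ ++ x :: y :: x' :: l₂, ?_, ?_, ?_, ?_⟩
  · simp at hlen ⊢; omega
  · have : (l₁ ++ x :: y :: x' :: l₂).Perm (y :: (l₁ ++ x :: x' :: l₂)) := by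
      have := List.perm_middle (a := y) (l₁ := l₁ ++ [x]) (l₂ := x' :: l₂)
      simpa using this
    rw [this.nodup_iff, List.nodup_cons]
    exact ⟨hyl, hn⟩
  · intro z hz
    by_cases hzy : z = y
    · subst hzy; exact hy
    · apply hl z
      simp only [List.mem_append, List.mem_cons] at hz ⊢
      tauto
  · rw [List.isChain_split] at hch ⊢
    rw [List.isChain_cons_cons] at hch ⊢
    rw [List.isChain_cons_cons]
    exact ⟨hch.1, by rw [hs]; exact h1, h2, hch.2.2⟩

lemma not_cons {l : List V} {x y : V} {t : ℕ}
    (hno : ¬ MonoPath c S r (t + 1)) (hlen : (x :: l).length = t)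
    (hn : (x :: l).Nodup) (hl : ∀ z ∈ x :: l, z ∈ S)
    (hch : (x :: l).IsChain (fun x y => c x y = r))
    (hy : y ∈ S) (hyl : y ∉ x :: l) : c y x ≠ r := by
  intro h1
  apply hno
  refine ⟨y :: x :: l, by simpa using hlen, List.nodup_cons.2 ⟨hyl, hn⟩, ?_, ?_⟩
  · intro z hz
    rcases List.mem_cons.1 hz with rfl | hz
    · exact hy
    · exact hl z hz
  · rw [List.isChain_cons_cons]; exact ⟨h1, hch⟩

lemma not_snoc (hs : ∀ x y, c x y = c y x) (l : List V) {x y : V} {t : ℕ}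
    (hno : ¬ MonoPath c S r (t + 1)) (hlen : (l ++ [x]).length = t)
    (hn : (l ++ [x]).Nodup) (hl : ∀ z ∈ l ++ [x], z ∈ S)
    (hch : (l ++ [x]).IsChain (fun x y => c x y = r))
    (hy : y ∈ S) (hyl : y ∉ l ++ [x]) : c y x ≠ r := by
  have hrev := List.isChain_reverse.2 hch
  have e : (l ++ [x]).reverse = x :: l.reverse := by simp
  have hch' : (x :: l.reverse).IsChain (fun x y => c x y = r) := by
    rw [← e, List.isChain_reverse]
    simpa only [hs] using hch
  refine not_cons hno (l := l.reverse) (by rw [← e, List.length_reverse]; exact hlen)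
    (by rw [← e, List.nodup_reverse]; exact hn) ?_ hch' hy ?_
  · intro z hz; rw [← e, List.mem_reverse] at hz; exact hl z hz
  · rw [← e, List.mem_reverse]; exact hyl

/-- What is kept from an `r`-colored path on `t` vertices when no `r`-colored path has `t + 1`
vertices: its ends `p`, `q`, its set `I` of interior vertices, and two of these, `f` and `g`. No
vertex outside is joined to an end in color `r`, every vertex outside has a `b`-neighbour in `I`, and
if `t ≥ 6` it has two of them, unless it is joined to `f` or `g` in a third color. -/
structure Skeleton (c : V → V → κ) (S : Finset V) (r b : κ) (t : ℕ) (p q f g : V) (I : Finset V) :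
    Prop where
  hp : p ∈ S
  hq : q ∈ S
  hpq : p ≠ q
  hI : I ⊆ S
  hpI : p ∉ I
  hqI : q ∉ I
  card : I.card + 2 = t
  endp : ∀ y ∈ S, y ≠ p → y ≠ q → y ∉ I → c y p ≠ r
  endq : ∀ y ∈ S, y ≠ p → y ≠ q → y ∉ I → c y q ≠ r
  one : ∀ y ∈ S, y ≠ p → y ≠ q → y ∉ I → ∃ e ∈ I, c y e = b
  two : 6 ≤ t → f ∈ I ∧ g ∈ I ∧ ∀ y ∈ S, y ≠ p → y ≠ q → y ∉ I → ¬ Third c S r b y f →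
    ¬ Third c S r b y g → ∃ e ∈ I, ∃ e' ∈ I, e ≠ e' ∧ c y e = b ∧ c y e' = b

/-- The interior vertices `f`, `g` are the third vertices from either end. A vertex `y` outside
cannot have a third-colored edge to a neighbour `u` of an end: as the third-colored edges form a
matching, `y` would be joined to the end in color `r` just like `u`. -/
lemma exists_skeleton (hs : ∀ x y, c x y = c y x) (hg : NoRainbow c) {t : ℕ}
    (hM : ∀ x y z, Third c S r b x y → Third c S r b x z → y = z)
    (hT : t ≤ 5 → ∀ x y, ¬ Third c S r b x y) (ht4 : 4 ≤ t) (ht7 : t ≤ 7)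
    (hP : MonoPath c S r t) (hno : ¬ MonoPath c S r (t + 1)) :
    ∃ p q f g I, Skeleton c S r b t p q f g I := by
  obtain ⟨l, hlen, hn, hl, hch⟩ := hP
  obtain ⟨x, hx⟩ : ∃ x : ℕ → V, ∀ i (h : i < l.length), x i = l[i] :=
    ⟨fun i => if h : i < l.length then l[i] else l[0], fun i h => by simp [h]⟩
  have hinj : ∀ i j, i < t → j < t → x i = x j → i = j := by
    intro i j hi hj h
    rw [hx i (by omega), hx j (by omega)] at h
    exact (hn.getElem_inj_iff).1 h
  have hxl : ∀ i, i < t → x i ∈ l := by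
    intro i hi; rw [hx i (by omega)]; exact List.getElem_mem _
  have hxS : ∀ i, i < t → x i ∈ S := fun i hi => hl _ (hxl i hi)
  have hred : ∀ i, i + 1 < t → c (x i) (x (i + 1)) = r := by
    intro i hi
    rw [hx i (by omega), hx (i + 1) (by omega)]
    exact List.isChain_iff_getElem.1 hch i (by omega)
  have h0 : ∀ y ∈ S, y ∉ l → c y (x 0) ≠ r := by
    intro y hy hyl
    have e : l = x 0 :: l.drop 1 := by
      rw [hx 0 (by omega), ← List.drop_eq_getElem_cons]; simp
    exact not_cons (l := l.drop 1) hno (e ▸ hlen) (e ▸ hn) (e ▸ hl) (e ▸ hch) hy (e ▸ hyl)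
  have hlast : ∀ y ∈ S, y ∉ l → c y (x (t - 1)) ≠ r := by
    intro y hy hyl
    have e : l = l.take (t - 1) ++ [x (t - 1)] := by
      rw [hx (t - 1) (by omega), List.take_append_getElem, List.take_of_length_le (by omega)]
    exact not_snoc hs (l.take (t - 1)) hno (e ▸ hlen) (e ▸ hn) (e ▸ hl) (e ▸ hch) hy (e ▸ hyl)
  have hcons : ∀ i, i + 1 < t → ∀ y ∈ S, y ∉ l → c y (x i) = r → c y (x (i + 1)) ≠ r := by
    intro i hi y hy hyl
    have e : l = l.take i ++ x i :: x (i + 1) :: l.drop (i + 2) := by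
      rw [hx i (by omega), hx (i + 1) (by omega), ← List.drop_eq_getElem_cons,
        ← List.drop_eq_getElem_cons, List.take_append_drop]
    exact not_insert hs (l.take i) (l.drop (i + 2)) hno (e ▸ hlen) (e ▸ hn) (e ▸ hl) (e ▸ hch) hy
      (e ▸ hyl)
  have hne : ∀ y ∉ l, ∀ i < t, y ≠ x i := by rintro y hyl i hi rfl; exact hyl (hxl i hi)
  have hthird : ∀ y ∈ S, y ∉ l → ∀ i < t, c y (x i) ≠ r → c y (x i) ≠ b →
      Third c S r b y (x i) :=
    fun y hy hyl i hi h1 h2 => ⟨hy, hxS i hi, hne y hyl i hi, h1, h2⟩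
  -- One of two consecutive vertices is joined to `y` in color `b`, unless one of them is joined to
  -- it in a third color.
  have hpair : ∀ i, i + 1 < t → ∀ y ∈ S, y ∉ l → ¬ Third c S r b y (x i) →
      ¬ Third c S r b y (x (i + 1)) → c y (x i) = b ∨ c y (x (i + 1)) = b := by
    intro i hi y hy hyl h1 h2
    have h3 := hcons i hi y hy hyl
    have h4 := hthird y hy hyl i (by omega)
    have h5 := hthird y hy hyl (i + 1) hi
    tauto
  -- If `y u` is third-colored, then `y` is joined in color `r` to all `r`-neighbours of `u`.
  have htwin : ∀ y u z, Third c S r b y u → z ∈ S → z ≠ u → z ≠ y → c z u = r → c y z = r := by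
    intro y u z h hz hzu hzy hr
    by_contra hcon
    have h1 := hg y u z h.2.2.1 hzu.symm hzy.symm
    have h2 := hM y u z h
    have h3 := h.2.2.2
    have h4 := hs u z
    by_cases hb : c y z = b
    · grind
    · exact hzu (h2 ⟨h.1, hz, hzy.symm, hcon, hb⟩).symm
  have hmem : ∀ y, y ≠ x 0 → y ≠ x (t - 1) → y ∉ (Finset.Icc 1 (t - 2)).image x → y ∉ l := by
    intro y hy0 hyt hyI hyl
    obtain ⟨i, hi, rfl⟩ := List.getElem_of_mem hyl
    rw [← hx i hi] at hy0 hyt hyI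
    have hi0 : i ≠ 0 := by rintro rfl; exact hy0 rfl
    have hit : i ≠ t - 1 := by rintro rfl; exact hyt rfl
    exact hyI (Finset.mem_image_of_mem _ (Finset.mem_Icc.2 ⟨by omega, by omega⟩))
  have hmemI : ∀ i, 1 ≤ i → i ≤ t - 2 → x i ∈ (Finset.Icc 1 (t - 2)).image x :=
    fun i h1 h2 => Finset.mem_image_of_mem _ (Finset.mem_Icc.2 ⟨h1, h2⟩)
  refine ⟨x 0, x (t - 1), x 2, x (t - 3), (Finset.Icc 1 (t - 2)).image x, ?_⟩
  refine ⟨hxS _ (by omega), hxS _ (by omega), ?_, ?_, ?_, ?_, ?_, ?_, ?_, ?_, ?_⟩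
  · intro h; have := hinj _ _ (by omega) (by omega) h; omega
  · intro z hz
    obtain ⟨i, hi, rfl⟩ := Finset.mem_image.1 hz
    rw [Finset.mem_Icc] at hi
    exact hxS i (by omega)
  · intro h
    obtain ⟨i, hi, h⟩ := Finset.mem_image.1 h
    rw [Finset.mem_Icc] at hi
    have := hinj _ _ (by omega) (by omega) h; omega
  · intro h
    obtain ⟨i, hi, h⟩ := Finset.mem_image.1 h
    rw [Finset.mem_Icc] at hi
    have := hinj _ _ (by omega) (by omega) h; omega
  · rw [Finset.card_image_of_injOn, Nat.card_Icc]
    · omega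
    · intro i hi j hj h
      simp only [Finset.coe_Icc, Set.mem_Icc] at hi hj
      exact hinj i j (by omega) (by omega) h
  · exact fun y hy h1 h2 h3 => h0 y hy (hmem y h1 h2 h3)
  · exact fun y hy h1 h2 h3 => hlast y hy (hmem y h1 h2 h3)
  · intro y hy h1 h2 h3
    have hyl := hmem y h1 h2 h3
    by_cases hth : Third c S r b y (x 1) ∨ Third c S r b y (x 2)
    · have h5 : 5 < t := by
        by_contra h5
        exact hth.elim (hT (by omega) _ _) (hT (by omega) _ _)
      -- The unique third-colored edge at `y` goes to `x 1` or `x 2`, so not to `x (t - 3)` or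
      -- `x (t - 2)`, which are different vertices as `t ≥ 6`.
      have hnot : ∀ i, 2 < i → i < t → ¬ Third c S r b y (x i) := by
        intro i hi hit h
        rcases hth with h' | h'
        · have := hinj _ _ (by omega) hit (hM y _ _ h' h); omega
        · have := hinj _ _ (by omega) hit (hM y _ _ h' h); omega
      have := hpair (t - 3) (by omega) y hy hyl (hnot _ (by omega) (by omega))
        (hnot _ (by omega) (by omega))
      rcases this with h | h
      · exact ⟨_, hmemI _ (by omega) (by omega), h⟩
      · exact ⟨_, hmemI _ (by omega) (by omega), h⟩
    · rw [not_or] at hth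
      rcases hpair 1 (by omega) y hy hyl hth.1 hth.2 with h | h
      · exact ⟨_, hmemI _ (by omega) (by omega), h⟩
      · exact ⟨_, hmemI _ (by omega) (by omega), h⟩
  · intro h6
    refine ⟨hmemI _ (by omega) (by omega), hmemI _ (by omega) (by omega), ?_⟩
    intro y hy h1 h2 h3 hf hg'
    have hyl := hmem y h1 h2 h3
    have hn1 : ¬ Third c S r b y (x 1) := by
      intro h
      refine h0 y hy hyl (htwin y _ _ h (hxS 0 (by omega)) ?_ (hne y hyl 0 (by omega)).symm
        (hred 0 (by omega)))
      intro h; have := hinj _ _ (by omega) (by omega) h; omega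
    have e1 : t - 3 + 1 = t - 2 := by omega
    have e2 : t - 2 + 1 = t - 1 := by omega
    have hn2 : ¬ Third c S r b y (x (t - 2)) := by
      intro h
      refine hlast y hy hyl (htwin y _ _ h (hxS (t - 1) (by omega)) ?_
        (hne y hyl (t - 1) (by omega)).symm ?_)
      · intro h; have := hinj _ _ (by omega) (by omega) h; omega
      · rw [hs, ← e2]; exact hred _ (by omega)
    have h4 := hpair 1 (by omega) y hy hyl hn1 hf
    have h5 := hpair (t - 3) (by omega) y hy hyl hg' (e1 ▸ hn2)
    rw [e1] at h5
    obtain ⟨i, hi1, hi2, hib⟩ : ∃ i, 1 ≤ i ∧ i ≤ 2 ∧ c y (x i) = b := by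
      rcases h4 with h | h
      · exact ⟨1, by omega, by omega, h⟩
      · exact ⟨2, by omega, by omega, h⟩
    obtain ⟨k, hk1, hk2, hkb⟩ : ∃ k, t - 3 ≤ k ∧ k ≤ t - 2 ∧ c y (x k) = b := by
      rcases h5 with h | h
      · exact ⟨t - 3, by omega, by omega, h⟩
      · exact ⟨t - 2, by omega, by omega, h⟩
    refine ⟨_, hmemI i (by omega) (by omega), _, hmemI k (by omega) (by omega), ?_, hib, hkb⟩
    intro h; have := hinj _ _ (by omega) (by omega) h; omega

lemma third_symm (hs : ∀ x y, c x y = c y x) {x y : V} (h : Third c S r b x y) :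
    Third c S r b y x :=
  ⟨h.2.1, h.1, h.2.2.1.symm, by rw [hs]; exact h.2.2.2.1, by rw [hs]; exact h.2.2.2.2⟩

/-! ### The path in the second color -/

/-- Outside the skeleton there are a vertex `v` and a set `W` of `β` vertices, all joined to `p` in
color `b`, with `W` also joined to `q` in color `b`. For `β = 3` the vertex `v` can be chosen such
that `Skeleton.two` applies to it. -/
lemma Skeleton.exists_blue (hs : ∀ x y, c x y = c y x) {t β : ℕ} {p q f g : V} {I : Finset V}
    (h : Skeleton c S r b t p q f g I)
    (hM : ∀ x y z, Third c S r b x y → Third c S r b x z → y = z)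
    (hβ3 : β = 3 → 6 ≤ t) (hcard : t + β + 1 ≤ S.card)
    (hcardT : ∀ x y, Third c S r b x y → t + β + 2 ≤ S.card) :
    ∃ (v : V) (W : Finset V), v ∉ W ∧ W.card = β ∧ (∀ y, y = v ∨ y ∈ W → y ∈ S ∧ y ≠ p ∧ y ≠ q ∧ y ∉ I ∧ c y p = b) ∧
      (∀ y ∈ W, c y q = b) ∧ (β = 3 → ¬ Third c S r b v f ∧ ¬ Third c S r b v g) := by
  classical
  set Y := S \ insert p (insert q I) with hY
  have hYc : Y.card + t = S.card := by
    have h1 : insert p (insert q I) ⊆ S := by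
      simp [Finset.insert_subset_iff, h.hp, h.hq, h.hI]
    have h2 := Finset.card_sdiff_add_card_eq_card h1
    rw [Finset.card_insert_of_notMem (by simp [h.hpq, h.hpI]),
      Finset.card_insert_of_notMem h.hqI, ← hY] at h2
    have := h.card
    omega
  have hYm : ∀ y ∈ Y, y ∈ S ∧ y ≠ p ∧ y ≠ q ∧ y ∉ I := by
    intro y hy
    simp only [hY, Finset.mem_sdiff, Finset.mem_insert, not_or] at hy
    exact ⟨hy.1, hy.2⟩
  have hTp : ∀ y ∈ Y, c y p ≠ b → Third c S r b p y := fun y hy hyb =>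
    have ⟨h1, h2, h3, h4⟩ := hYm y hy
    third_symm hs ⟨h1, h.hp, h2, h.endp y h1 h2 h3 h4, hyb⟩
  have hTq : ∀ y ∈ Y, c y q ≠ b → Third c S r b q y := fun y hy hyb =>
    have ⟨h1, h2, h3, h4⟩ := hYm y hy
    third_symm hs ⟨h1, h.hq, h3, h.endq y h1 h2 h3 h4, hyb⟩
  -- The only vertex of `Y` not blue to `p`, if any, is the third-colored neighbour of `p`. When it
  -- exists, `hcardT` makes up for dropping it.
  obtain ⟨Y₀, hY₀, hc, hYp⟩ : ∃ Y₀ ⊆ Y, β + 1 ≤ Y₀.card ∧ ∀ y ∈ Y₀, c y p = b := by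
    by_cases hu : ∃ u ∈ Y, c u p ≠ b
    · obtain ⟨u, hu, hub⟩ := hu
      refine ⟨Y.erase u, Finset.erase_subset _ _, ?_, ?_⟩
      · rw [Finset.card_erase_of_mem hu]
        have := hcardT p u (hTp u hu hub)
        omega
      · intro y hy
        rw [Finset.mem_erase] at hy
        by_contra hyb
        exact hy.1 (hM p y u (hTp y hy.2 hyb) (hTp u hu hub))
    · push Not at hu
      exact ⟨Y, subset_rfl, by omega, hu⟩
  -- The third-colored neighbour of `q` has to be `v`. If there is none, then for `β = 3` one of the
  -- four vertices of `Y₀` is not a third-colored neighbour of `f` or `g`.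
  obtain ⟨v, hv, hq, hfg⟩ : ∃ v ∈ Y₀, (∀ y ∈ Y₀, y ≠ v → c y q = b) ∧
      (β = 3 → ¬ Third c S r b v f ∧ ¬ Third c S r b v g) := by
    by_cases hv : ∃ v ∈ Y₀, c v q ≠ b
    · obtain ⟨v, hv, hvb⟩ := hv
      have hvT := hTq v (hY₀ hv) hvb
      refine ⟨v, hv, ?_, ?_⟩
      · intro y hy hyv
        by_contra hyb
        exact hyv (hM q y v (hTq y (hY₀ hy) hyb) hvT)
      · intro hβ
        have h2 := h.two (hβ3 hβ)
        have hqI := h.hqI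
        exact ⟨fun hf => hqI (hM v q f (third_symm hs hvT) hf ▸ h2.1),
          fun hf => hqI (hM v q g (third_symm hs hvT) hf ▸ h2.2.1)⟩
    · push Not at hv
      obtain ⟨v, hvY, hv'⟩ : ∃ v ∈ Y₀, (β = 3 → ¬ Third c S r b v f ∧ ¬ Third c S r b v g) := by
        by_cases hβ : β = 3
        · by_contra! hno
          have hone : ∀ d, (Y₀.filter (Third c S r b · d)).card ≤ 1 := by
            intro d
            rw [Finset.card_le_one]
            intro x hx y hy
            rw [Finset.mem_filter] at hx hy
            exact hM d x y (third_symm hs hx.2) (third_symm hs hy.2)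
          have hsub : Y₀ ⊆ Y₀.filter (Third c S r b · f) ∪ Y₀.filter (Third c S r b · g) := by
            intro y hy
            have := (hno y hy).2
            simp only [Finset.mem_union, Finset.mem_filter]
            tauto
          have h1 := Finset.card_le_card hsub
          have h2 := Finset.card_union_le (Y₀.filter (Third c S r b · f))
            (Y₀.filter (Third c S r b · g))
          have h3 := hone f
          have h4 := hone g
          omega
        · obtain ⟨v, hv⟩ : Y₀.Nonempty := by rw [← Finset.card_pos]; omega
          exact ⟨v, hv, fun h => absurd h hβ⟩
      exact ⟨v, hvY, fun y hy _ => hv y hy, hv'⟩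
  obtain ⟨W, hW, hWc⟩ := Finset.exists_subset_card_eq (s := Y₀.erase v) (n := β)
    (by rw [Finset.card_erase_of_mem hv]; omega)
  have hW' : ∀ y ∈ W, y ≠ v ∧ y ∈ Y₀ := fun y hy => Finset.mem_erase.1 (hW hy)
  refine ⟨v, W, fun hvW => (hW' v hvW).1 rfl, hWc, ?_, fun y hy => hq y (hW' y hy).2 (hW' y hy).1,
    hfg⟩
  intro y hy
  have hyY : y ∈ Y₀ := by
    rcases hy with rfl | hy
    · exact hv
    · exact (hW' y hy).2
  have ⟨h1, h2, h3, h4⟩ := hYm y (hY₀ hyY)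
  exact ⟨h1, h2, h3, h4, hYp y hyY⟩

/-- Of four vertices outside a skeleton with at most five interior vertices, two share a
`b`-neighbour in the interior: all but at most two of them have at least two such neighbours, and
the others at least one, which makes six. -/
lemma Skeleton.exists_common (hs : ∀ x y, c x y = c y x) {t : ℕ} {p q f g : V} {I Z : Finset V}
    (h : Skeleton c S r b t p q f g I)
    (hM : ∀ x y z, Third c S r b x y → Third c S r b x z → y = z)
    (ht : 6 ≤ t) (ht7 : t ≤ 7) (hZ : ∀ y ∈ Z, y ∈ S ∧ y ≠ p ∧ y ≠ q ∧ y ∉ I) (hZc : 4 ≤ Z.card) :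
    ∃ y ∈ Z, ∃ z ∈ Z, y ≠ z ∧ ∃ s ∈ I, c y s = b ∧ c z s = b := by
  classical
  by_contra! hno
  set N : V → Finset V := fun y => I.filter (c y · = b) with hN
  obtain ⟨bad, hbad⟩ : ∃ bad : V → Prop,
    ∀ y, bad y ↔ Third c S r b y f ∨ Third c S r b y g := ⟨_, fun _ => Iff.rfl⟩
  have hdisj : (Z : Set V).PairwiseDisjoint N := by
    intro y hy z hz hyz
    rw [Function.onFun, Finset.disjoint_left]
    intro s hsy hsz
    simp only [hN, Finset.mem_filter] at hsy hsz
    exact hno y hy z hz hyz s hsy.1 hsy.2 hsz.2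
  have h1 := Finset.card_biUnion (s := Z) (t := N) hdisj
  have h2 : (Z.biUnion N).card ≤ I.card := by
    refine Finset.card_le_card ?_
    intro s hs'
    simp only [Finset.mem_biUnion, hN, Finset.mem_filter] at hs'
    obtain ⟨_, _, hs', _⟩ := hs'
    exact hs'
  have h3 : ∑ y ∈ Z, 2 ≤ ∑ y ∈ Z, ((N y).card + if bad y then 1 else 0) := by
    refine Finset.sum_le_sum fun y hy => ?_
    obtain ⟨hy1, hy2, hy3, hy4⟩ := hZ y hy
    split_ifs with hb
    · obtain ⟨e, he, heb⟩ := h.one y hy1 hy2 hy3 hy4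
      have : 0 < (N y).card := Finset.card_pos.2 ⟨e, by simp [hN, he, heb]⟩
      omega
    · obtain ⟨e, he, e', he', hee, heb, heb'⟩ :=
        (h.two ht).2.2 y hy1 hy2 hy3 hy4 (fun hf => hb ((hbad y).2 (Or.inl hf)))
          (fun hf => hb ((hbad y).2 (Or.inr hf)))
      have : 1 < (N y).card :=
        Finset.one_lt_card.2 ⟨e, by simp [hN, he, heb], e', by simp [hN, he', heb'], hee⟩
      omega
  rw [Finset.sum_add_distrib, ← h1, ← Finset.card_filter, Finset.sum_const, smul_eq_mul] at h3
  have hone : ∀ d, (Z.filter (Third c S r b · d)).card ≤ 1 := by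
    intro d
    rw [Finset.card_le_one]
    intro x hx y hy
    rw [Finset.mem_filter] at hx hy
    exact hM d x y (third_symm hs hx.2) (third_symm hs hy.2)
  have h4 : ∀ _ : DecidablePred bad, (Z.filter bad).card ≤ 2 := by
    intro _
    have hsub : Z.filter bad ⊆ Z.filter (Third c S r b · f) ∪ Z.filter (Third c S r b · g) := by
      intro y hy
      simp only [Finset.mem_union, Finset.mem_filter] at hy ⊢
      have := hbad y
      tauto
    have := Finset.card_le_card hsub
    have := Finset.card_union_le (Z.filter (Third c S r b · f)) (Z.filter (Third c S r b · g))
    have := hone f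
    have := hone g
    omega
  have h5 := h3.trans (Nat.add_le_add_left (h4 _) _)
  have := h.card
  omega

/-- The ends `p` and `q` link the outside vertices to a path in color `b`. For `β ≥ 2` interior
vertices are needed as well: as a last vertex for `β = 2`, and as a first vertex `e` and a link `s`
for `β = 3`. -/
lemma Skeleton.conclude (hs : ∀ x y, c x y = c y x) {t β : ℕ} {p q f g : V} {I : Finset V}
    (h : Skeleton c S r b t p q f g I)
    (hM : ∀ x y z, Third c S r b x y → Third c S r b x z → y = z)
    (hβ1 : 1 ≤ β) (hβ : β ≤ 3) (ht7 : t ≤ 7)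
    (hβ3 : β = 3 → 6 ≤ t) (hcard : t + β + 1 ≤ S.card)
    (hcardT : ∀ x y, Third c S r b x y → t + β + 2 ≤ S.card) :
    MonoPath c S b (2 * β + 2) := by
  obtain ⟨v, W, hvW, hWc, hY, hWq, hv⟩ := h.exists_blue hs hM hβ3 hcard hcardT
  have hY' : ∀ y, y = v ∨ y ∈ W → c p y = b := fun y hy => by rw [hs]; exact (hY y hy).2.2.2.2
  have hWq' : ∀ y ∈ W, c q y = b := fun y hy => by rw [hs]; exact hWq y hy
  have hp := h.hp
  have hq := h.hq
  have hpq := h.hpq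
  have hI := h.hI
  have hpI := h.hpI
  have hqI := h.hqI
  obtain rfl | rfl | rfl : β = 1 ∨ β = 2 ∨ β = 3 := by omega
  · obtain ⟨w, rfl⟩ := Finset.card_eq_one.1 hWc
    have h1 := hY v (by simp)
    have h2 := hY w (by simp)
    have h3 := hY' w (by simp)
    have h4 := hWq w (by simp)
    refine ⟨[v, p, w, q], rfl, ?_, ?_, ?_⟩
    · simp only [Finset.mem_singleton] at hvW
      simp; grind
    · simp; grind
    · simp; grind
  · obtain ⟨w, w', hww, rfl⟩ := Finset.card_eq_two.1 hWc
    have h1 := hY v (by simp)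
    have h2 := hY w (by simp)
    have h2' := hY w' (by simp)
    have h3 := hY' w (by simp)
    have h4 := hWq w (by simp)
    have h5 := hWq' w' (by simp)
    obtain ⟨e, he, heb⟩ := h.one w' h2'.1 h2'.2.1 h2'.2.2.1 h2'.2.2.2.1
    have heS := hI he
    refine ⟨[v, p, w, q, w', e], rfl, ?_, ?_, ?_⟩
    · simp only [Finset.mem_singleton, Finset.mem_insert] at hvW
      simp; grind
    · simp; grind
    · simp; grind
  · have ht6 := hβ3 rfl
    have hv1 := hY v (by simp)
    obtain ⟨e₁, he₁, e₂, he₂, hee, hb₁, hb₂⟩ :=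
      (h.two ht6).2.2 v hv1.1 hv1.2.1 hv1.2.2.1 hv1.2.2.2.1 (hv rfl).1 (hv rfl).2
    obtain ⟨y, hy, z, hz, hyz, s, hsI, hys, hzs⟩ := h.exists_common hs hM (Z := insert v W) ht6 ht7
      (fun y hy => by
        have := hY y (Finset.mem_insert.1 hy)
        exact ⟨this.1, this.2.1, this.2.2.1, this.2.2.2.1⟩)
      (by rw [Finset.card_insert_of_notMem hvW]; omega)
    obtain ⟨e, he, hes, hve⟩ : ∃ e ∈ I, e ≠ s ∧ c v e = b := by
      by_cases e₁ = s <;> grind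
    rw [Finset.mem_insert] at hy hz
    have hev : c e v = b := by rw [hs]; exact hve
    have heS := hI he
    have hsS := hI hsI
    -- The link `s` is a common neighbour either of `v` and a vertex of `W`, or of two vertices of `W`.
    have hvcase : ∀ w ∈ W, c v s = b → c w s = b → MonoPath c S b 8 := by
      intro w hw hvs hws
      have hc2 : (W.erase w).card = 2 := by rw [Finset.card_erase_of_mem hw]; omega
      obtain ⟨w', w'', hww, hW⟩ := Finset.card_eq_two.1 hc2
      have hm' : w' ∈ W.erase w := by simp [hW]
      have hm'' : w'' ∈ W.erase w := by simp [hW]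
      rw [Finset.mem_erase] at hm' hm''
      have h1 := hY w (Or.inr hw)
      have h2 := hY w' (Or.inr hm'.2)
      have h3 := hY w'' (Or.inr hm''.2)
      have h4 := hY' w' (Or.inr hm'.2)
      have h5 := hWq w' hm'.2
      have h6 := hWq' w'' hm''.2
      have h7 := hs s w
      refine ⟨[e, v, s, w, p, w', q, w''], rfl, ?_, ?_, ?_⟩
      · simp only [List.nodup_cons]
        refine ⟨?_, ?_, ?_, ?_, ?_, ?_, ?_, ?_, List.nodup_nil⟩ <;>
          simp only [List.mem_cons, List.not_mem_nil, not_or, or_false, not_false_eq_true] <;>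
          grind
      · simp; grind
      · simp; grind
    have hWcase : ∀ w ∈ W, ∀ w' ∈ W, w ≠ w' → c w s = b → c w' s = b → MonoPath c S b 8 := by
      intro w hw w' hw' hne hws hws'
      have hc1 : ((W.erase w).erase w').card = 1 := by
        rw [Finset.card_erase_of_mem (by simp [hne.symm, hw']), Finset.card_erase_of_mem hw]; omega
      obtain ⟨w'', hW⟩ := Finset.card_eq_one.1 hc1
      have hm'' : w'' ∈ (W.erase w).erase w' := by simp [hW]
      simp only [Finset.mem_erase] at hm''
      have h1 := hY w (Or.inr hw)
      have h2 := hY w' (Or.inr hw')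
      have h3 := hY w'' (Or.inr hm''.2.2)
      have h4 := hY' w (Or.inr hw)
      have h5 := hWq w' hw'
      have h6 := hWq' w'' hm''.2.2
      have h7 := hs s w'
      refine ⟨[e, v, p, w, s, w', q, w''], rfl, ?_, ?_, ?_⟩
      · simp only [List.nodup_cons]
        refine ⟨?_, ?_, ?_, ?_, ?_, ?_, ?_, ?_, List.nodup_nil⟩ <;>
          simp only [List.mem_cons, List.not_mem_nil, not_or, or_false, not_false_eq_true] <;>
          grind
      · simp; grind
      · simp; grind
    rcases hy with rfl | hy <;> rcases hz with rfl | hz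
    · exact absurd rfl hyz
    · exact hvcase z hz hys hzs
    · exact hvcase y hy hzs hys
    · exact hWcase y hy z hz hyz hys hzs

/-- The skeleton comes from a longest path in color `r`, on `2 * α` or `2 * α + 1` vertices. -/
lemma two_color (hs : ∀ x y, c x y = c y x) (hg : NoRainbow c) {α β : ℕ}
    (hM : ∀ x y z, Third c S r b x y → Third c S r b x z → y = z)
    (hβ1 : 1 ≤ β) (hβ : β ≤ α) (hα2 : 2 ≤ α) (hα3 : α ≤ 3) (hcard : 2 * α + β + 2 ≤ S.card)
    (hT : ∀ x y, Third c S r b x y → α = 3 ∧ 2 * α + β + 3 ≤ S.card)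
    (hP : MonoPath c S r (2 * α)) :
    MonoPath c S r (2 * α + 2) ∨ MonoPath c S b (2 * β + 2) := by
  have key : ∀ t, 2 * α ≤ t → t ≤ 2 * α + 1 → MonoPath c S r t → ¬ MonoPath c S r (t + 1) →
      MonoPath c S b (2 * β + 2) := by
    intro t ht ht' hP hno
    obtain ⟨p, q, f, g, I, h⟩ := exists_skeleton hs hg hM
      (fun ht5 x y hxy => by have := hT x y hxy; omega) (by omega) (by omega) hP hno
    refine h.conclude hs hM hβ1 (by omega) (by omega) (by omega) (by omega) fun x y hxy => ?_
    have := hT x y hxy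
    omega
  by_cases h1 : MonoPath c S r (2 * α + 1)
  · by_cases h2 : MonoPath c S r (2 * α + 2)
    · exact Or.inl h2
    · exact Or.inr (key (2 * α + 1) (by omega) le_rfl h1 h2)
  · exact Or.inr (key (2 * α) le_rfl (by omega) hP h1)

/-! ### The induction -/

variable [Fintype κ] {m : κ → ℕ}

/-- The Ramsey statement that is proved by induction on `∑ j, m j`: if every `m j` is at most `3` and
`S` has at least `max m + 2 + ∑ j, m j` vertices, then some color `j` has a path on `2 * m j + 2`
vertices. The maximum is expressed by a bound for each `i`. -/
def Forces (c : V → V → κ) (m : κ → ℕ) (S : Finset V) : Prop :=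
  (∀ j, m j ≤ 3) → (∀ i, m i + 2 + ∑ j, m j ≤ S.card) → ∃ j, MonoPath c S j (2 * m j + 2)

/-- Passing to a homogeneous set `A`: when color `j` joins `A` to at most `m j` outside vertices,
the induction hypothesis gives a path inside `A` that can be lengthened by weaving these vertices in.
Here `k y` is the color in which `y` is joined to `A`. -/
lemma reduce (hs : ∀ x y, c x y = c y x)
    (IH : ∀ m' A, ∑ j, m' j < ∑ j, m j → Forces c m' A) (hm : ∀ j, m j ≤ 3)
    (hcard : ∀ i, m i + 2 + ∑ j, m j ≤ S.card) {A : Finset V} (hA : A ⊆ S)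
    (hne : (S \ A).Nonempty) {k : V → κ} (hk : ∀ y ∈ S \ A, ∀ x ∈ A, c x y = k y)
    (hR : ∀ j (R : Finset V), (∀ y ∈ R, y ∈ S \ A ∧ k y = j) → R.card ≤ m j) :
    ∃ j, MonoPath c S j (2 * m j + 2) := by
  classical
  set R : κ → Finset V := fun j => (S \ A).filter (k · = j) with hRdef
  have hRm : ∀ j, ∀ y ∈ R j, y ∈ S \ A ∧ k y = j := fun j y hy => by simpa [hRdef] using hy
  have hle : ∀ j, (R j).card ≤ m j := fun j => hR j (R j) (hRm j)
  have hsum : (S \ A).card = ∑ j, (R j).card :=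
    Finset.card_eq_sum_card_fiberwise (fun _ _ => Finset.mem_coe.2 (Finset.mem_univ _))
  have hSA := Finset.card_sdiff_add_card_eq_card hA
  have hpos := Finset.card_pos.2 hne
  have hsub : ∑ j, (m j - (R j).card) + ∑ j, (R j).card = ∑ j, m j := by
    rw [← Finset.sum_add_distrib]
    exact Finset.sum_congr rfl fun j _ => Nat.sub_add_cancel (hle j)
  obtain ⟨j, l, hlen, hn, hl, hch⟩ := IH (fun j => m j - (R j).card) A (by omega)
    (fun j => (Nat.sub_le _ _).trans (hm j)) (fun i => by have := hcard i; dsimp only; omega)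
  refine ⟨j, ?_⟩
  dsimp only at hlen
  have hj := Finset.single_le_sum (f := fun j => m j - (R j).card) (fun _ _ => Nat.zero_le _)
    (Finset.mem_univ j)
  have hlA : l.toFinset ⊆ A := fun x hx => hl x (List.mem_toFinset.1 hx)
  have hc1 := Finset.card_sdiff_add_card_eq_card hlA
  rw [List.toFinset_card_of_nodup hn] at hc1
  have hRA : ∀ x ∈ A, x ∉ R j := fun x hx hxR => (Finset.mem_sdiff.1 (hRm j x hxR).1).2 hx
  have := hle j
  have := hcard j
  have key := extend (j := j) hs (R j) l hn hch (fun x hx => hA (hl x hx)) hA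
    (fun y hy => (Finset.mem_sdiff.1 (hRm j y hy).1).1)
    (fun x hx y hy => by rw [hk y (hRm j y hy).1 x hx, (hRm j y hy).2])
    (Finset.disjoint_left.2 hRA) (fun x hx => hRA x (hl x hx))
    (fun x hx => hl x (List.mem_of_mem_head? hx)) (by omega)
  convert key using 1
  omega

/-- The induction step when some cut has a single color. -/
lemma of_cut_mono (hs : ∀ x y, c x y = c y x)
    (IH : ∀ m' A, ∑ j, m' j < ∑ j, m j → Forces c m' A) (hm : ∀ j, m j ≤ 3)
    (hcard : ∀ i, m i + 2 + ∑ j, m j ≤ S.card) (h : Cut c S r r) :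
    ∃ j, MonoPath c S j (2 * m j + 2) := by
  have key : ∀ A B : Finset V, A ⊆ S → B = S \ A → B.card ≤ A.card → B.Nonempty →
      (∀ x ∈ A, ∀ y ∈ B, c x y = r) → ∃ j, MonoPath c S j (2 * m j + 2) := by
    rintro A B hA rfl hle hne hAB
    rcases Nat.lt_or_ge (m r) (S \ A).card with hlt | hge
    · obtain ⟨R, hR, hRc⟩ := Finset.exists_subset_card_eq (show m r + 1 ≤ (S \ A).card by omega)
      refine ⟨r, ?_⟩
      have := extend (j := r) hs (S := S) (A := A) R [] (by simp) (by simp) (by simp) hA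
        (hR.trans Finset.sdiff_subset) (fun x hx y hy => hAB x hx y (hR hy))
        (Finset.disjoint_of_subset_right hR Finset.disjoint_sdiff) (by simp) (by simp)
        (by simp; omega)
      convert this using 1
      simp; omega
    · refine reduce hs IH hm hcard hA hne (k := fun _ => r) (fun y hy x hx => hAB x hx y hy) ?_
      intro j R hR
      rcases R.eq_empty_or_nonempty with rfl | ⟨y, hy⟩
      · simp
      · obtain rfl := (hR y hy).2
        exact (Finset.card_le_card fun y hy => (hR y hy).1).trans hge
  obtain ⟨K, hK, hK1, hK2, hc⟩ := h
  have hc' : ∀ x ∈ K, ∀ y ∈ S \ K, c x y = r := fun x hx y hy => by simpa using hc x hx y hy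
  rcases le_total (S \ K).card K.card with hle | hle
  · exact key K (S \ K) hK rfl hle hK2 hc'
  · exact key (S \ K) K Finset.sdiff_subset (Finset.sdiff_sdiff_eq_self hK).symm hle hK1
      fun x hx y hy => by rw [hs]; exact hc' y hy x hx

/-- A homogeneous set `A` with at least `n` vertices, joined in color `r` to more than `n`
vertices, yields a path of color `r`: it alternates between the two sides, with one extra edge
of color `r` leaving the far side. That edge exists because `S` has no single-colored cut. -/
lemma path_of_homog (hs : ∀ x y, c x y = c y x) (hg : NoRainbow c) (hrb : r ≠ b)
    (hr : ¬ Cut c S r r) (hb : ¬ Cut c S b b) {A : Finset V} (hA : A ⊆ S) {x : V} (hx : x ∈ A)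
    (hom : ∀ y ∈ S \ A, ∀ z ∈ A, c z y = c x y) (hcr : ∀ y ∈ S \ A, c x y = r ∨ c x y = b)
    {n : ℕ} (hn : n ≤ A.card) {R : Finset V} (hR : ∀ y, y ∈ R ↔ y ∈ S \ A ∧ c x y = r)
    (hRc : n < R.card) : MonoPath c S r (2 * n + 2) := by
  have hRne : R.Nonempty := by rw [← Finset.card_pos]; omega
  obtain ⟨ρ, hρ, w, hw, hwb, hρw⟩ : ∃ ρ ∈ R, ∃ w ∈ S \ A, c x w = b ∧ c ρ w = r := by
    by_contra! hno
    by_cases hB : ∃ w ∈ S \ A, c x w = b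
    · obtain ⟨w, hw, hwb⟩ := hB
      refine hb ⟨A ∪ R, Finset.union_subset hA fun y hy =>
        (Finset.mem_sdiff.1 ((hR y).1 hy).1).1, ⟨x, by simp [hx]⟩, ⟨w, ?_⟩, ?_⟩
      · have := hR w
        simp only [Finset.mem_sdiff, Finset.mem_union] at hw this ⊢
        grind
      · intro y hy z hz
        have hzA : z ∈ S \ A := by simp only [Finset.mem_sdiff, Finset.mem_union] at hz ⊢; tauto
        have hzR : z ∉ R := by simp only [Finset.mem_sdiff, Finset.mem_union] at hz; tauto
        have hzb : c x z = b := (hcr z hzA).resolve_left fun h => hzR ((hR z).2 ⟨hzA, h⟩)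
        left
        rcases Finset.mem_union.1 hy with hy | hy
        · rw [hom z hzA y hy, hzb]
        · obtain ⟨hyA, hyr⟩ := (hR y).1 hy
          have h1 := hno y hy z hzA hzb
          have h2 := hg x y z (by rintro rfl; exact (Finset.mem_sdiff.1 hyA).2 hx)
            (by rintro rfl; exact hzR hy) (by rintro rfl; exact (Finset.mem_sdiff.1 hzA).2 hx)
          grind
    · push Not at hB
      refine hr ⟨A, hA, ⟨x, hx⟩, ?_, fun z hz y hy => ?_⟩
      · obtain ⟨ρ, hρ⟩ := hRne
        exact ⟨ρ, ((hR ρ).1 hρ).1⟩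
      · rw [hom y hy z hz]
        exact Or.inl ((hcr y hy).resolve_right (hB y hy))
  -- The path starts as `[ρ, w]`, with `w` on neither side of the bipartite graph.
  obtain ⟨A₀, hA₀, hA₀c⟩ := Finset.exists_subset_card_eq hn
  have hwR : w ∉ R := fun h => hrb (((hR w).1 h).2.symm.trans hwb)
  have hρA := ((hR ρ).1 hρ).1
  have hRA : ∀ y ∈ R, y ∉ A₀ := fun y hy h => (Finset.mem_sdiff.1 ((hR y).1 hy).1).2 (hA₀ h)
  have key := extend (j := r) hs (S := S) (A := R) A₀ [ρ, w]
    (by simp; rintro rfl; exact hwR hρ) (by simp [hρw])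
    (by simp [(Finset.mem_sdiff.1 hρA).1, (Finset.mem_sdiff.1 hw).1])
    (fun y hy => (Finset.mem_sdiff.1 ((hR y).1 hy).1).1) (hA₀.trans hA)
    (fun y hy z hz => by rw [hs, hom y ((hR y).1 hy).1 z (hA₀ hz), ((hR y).1 hy).2])
    (Finset.disjoint_left.2 hRA)
    (by
      have h1 := hRA ρ hρ
      have h2 : w ∉ A₀ := fun h => (Finset.mem_sdiff.1 hw).2 (hA₀ h)
      simp [h1, h2])
    (by simp [hρ])
    (by
      have : R \ [ρ, w].toFinset = R.erase ρ := by
        ext y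
        simp only [Finset.mem_sdiff, List.mem_toFinset, List.mem_cons, List.not_mem_nil,
          Finset.mem_erase]
        grind
      rw [this, Finset.card_erase_of_mem hρ]
      omega)
  convert key using 1
  simp; omega

/-- In a minimal counterexample without single-colored cuts the classes `part c S r b x`
are small. -/
lemma part_small (hs : ∀ x y, c x y = c y x) (hg : NoRainbow c)
    (IH : ∀ m' A, ∑ j, m' j < ∑ j, m j → Forces c m' A) (hm : ∀ j, m j ≤ 3)
    (hcard : ∀ i, m i + 2 + ∑ j, m j ≤ S.card) (hno : ∀ j, ¬ MonoPath c S j (2 * m j + 2))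
    (hrb : r ≠ b) (hcut : Cut c S r b) (hr : ¬ Cut c S r r) (hb : ¬ Cut c S b b)
    {x : V} (hx : x ∈ S) :
    (part c S r b x).card < m r ∨ (part c S r b x).card < m b := by
  classical
  by_contra! hbig
  set A := part c S r b x with hAdef
  have hA : A ⊆ S := part_subset x
  have hxA : x ∈ A := self_mem_part hx
  have hom : ∀ y ∈ S \ A, ∀ z ∈ A, c z y = c x y := fun y hy z hz =>
    part_homog hg hz (Finset.mem_sdiff.1 hy).1 (Finset.mem_sdiff.1 hy).2
  have hcr : ∀ y ∈ S \ A, c x y = r ∨ c x y = b := fun y hy =>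
    part_cross hxA (Finset.mem_sdiff.1 hy).1 (Finset.mem_sdiff.1 hy).2
  have h1 : ((S \ A).filter (c x · = r)).card ≤ m r := by
    by_contra! h
    exact hno r (path_of_homog hs hg hrb hr hb hA hxA hom hcr hbig.1
      (fun y => Finset.mem_filter) h)
  have h2 : ((S \ A).filter (c x · = b)).card ≤ m b := by
    by_contra! h
    exact hno b (path_of_homog hs hg hrb.symm hb hr hA hxA hom (fun y hy => (hcr y hy).symm) hbig.2
      (fun y => Finset.mem_filter) h)
  obtain ⟨z, hz, hzA⟩ := hcut.exists_not_mem_part hs x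
  obtain ⟨j, hj⟩ := reduce hs IH hm hcard hA ⟨z, Finset.mem_sdiff.2 ⟨hz, hzA⟩⟩ (k := c x) hom (by
    intro j R hR
    rcases R.eq_empty_or_nonempty with rfl | ⟨y, hy⟩
    · simp
    · have hsub : R ⊆ (S \ A).filter (c x · = j) := fun y hy => Finset.mem_filter.2 (hR y hy)
      have hle := Finset.card_le_card hsub
      obtain ⟨hy1, rfl⟩ := hR y hy
      rcases hcr y hy1 with h | h
      · rw [h] at hle ⊢; exact hle.trans h1
      · rw [h] at hle ⊢; exact hle.trans h2)
  exact hno j hj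

/-- The induction step when the third-colored edges form a matching and there is no cut in color
`r`. -/
lemma of_matching (hs : ∀ x y, c x y = c y x) (hg : NoRainbow c)
    (IH : ∀ m' A, ∑ j, m' j < ∑ j, m j → Forces c m' A) (hm : ∀ j, m j ≤ 3)
    (hcard : ∀ i, m i + 2 + ∑ j, m j ≤ S.card) (hrb : r ≠ b) (hcut : Cut c S r b)
    (hr : ¬ Cut c S r r) (hM : ∀ x y z, Third c S r b x y → Third c S r b x z → y = z)
    (h2 : 2 ≤ m r) (hT : ∀ x y, Third c S r b x y → m r = 3) (hle : m b ≤ m r) :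
    ∃ j, MonoPath c S j (2 * m j + 2) := by
  classical
  by_contra! hno
  have hP : MonoPath c S r (2 * m r) := by
    have hupd : ∀ i, Function.update m r (m r - 1) i ≤ m i := by
      intro i
      rcases eq_or_ne i r with rfl | h
      · simp
      · simp [h]
    have hlt : ∑ j, Function.update m r (m r - 1) j < ∑ j, m j :=
      Finset.sum_lt_sum (fun i _ => hupd i) ⟨r, Finset.mem_univ r, by simp; omega⟩
    obtain ⟨j, hj⟩ := IH (Function.update m r (m r - 1)) S hlt
      (fun j => (hupd j).trans (hm j)) (fun i => by have := hcard i; have := hupd i; omega)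
    rcases eq_or_ne j r with rfl | h
    · convert hj using 1
      simp; omega
    · simp only [Function.update_of_ne h] at hj
      exact absurd hj (hno j)
  have hb1 : 1 ≤ m b := by
    by_contra! hb0
    obtain ⟨K, hK, hK1, hK2, hc⟩ := hcut
    refine hr ⟨K, hK, hK1, hK2, fun x hx y hy => Or.inl ((hc x hx y hy).resolve_right fun h => ?_)⟩
    have := monoPath_two (c := c) (hK hx) (Finset.mem_sdiff.1 hy).1
      (by rintro rfl; exact (Finset.mem_sdiff.1 hy).2 hx)
    rw [h] at this
    refine hno b ?_
    rwa [show 2 * m b + 2 = 2 by omega]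
  have hsum : m r + m b ≤ ∑ j, m j := by
    rw [← Finset.sum_pair hrb]
    exact Finset.sum_le_sum_of_subset (Finset.subset_univ _)
  have hcr := hcard r
  have hT' : ∀ x y, Third c S r b x y → m r = 3 ∧ 2 * m r + m b + 3 ≤ S.card := by
    intro x y hxy
    refine ⟨hT x y hxy, ?_⟩
    obtain ⟨hx, hy, hne, h3, h4⟩ := hxy
    have hpos : 1 ≤ m (c x y) := by
      by_contra! h0
      refine hno (c x y) ?_
      rw [show 2 * m (c x y) + 2 = 2 by omega]
      exact monoPath_two hx hy hne
    -- A third color with `m j ≥ 1` raises the sum, and so the lower bound on `|S|`, by one.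
    have : m (c x y) + (m r + m b) ≤ ∑ j, m j := by
      rw [← Finset.sum_pair hrb, ← Finset.sum_insert (by simp [h3, h4])]
      exact Finset.sum_le_sum_of_subset (Finset.subset_univ _)
    omega
  rcases two_color hs hg hM hb1 hle h2 (hm r) (by omega) hT' hP with h | h
  · exact hno r h
  · exact hno b h

/-- The Ramsey statement for paths of different lengths in a Gallai coloring. -/
theorem forces [Nonempty κ] (hs : ∀ x y, c x y = c y x) (hg : NoRainbow c) (m : κ → ℕ)
    (S : Finset V) : Forces c m S := by
  classical
  induction hn : ∑ j, m j using Nat.strong_induction_on generalizing m S with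
  | _ n ih =>
  have IH : ∀ m' A, ∑ j, m' j < ∑ j, m j → Forces c m' A := fun m' A h => ih _ (hn ▸ h) m' A rfl
  intro hm hcard
  have hS : 2 ≤ S.card := by
    have := hcard (Classical.arbitrary κ)
    omega
  by_cases hmono : ∃ r, Cut c S r r
  · obtain ⟨r, h⟩ := hmono
    exact of_cut_mono hs IH hm hcard h
  push Not at hmono
  obtain ⟨r, b, hcut⟩ := exists_cut hs hg S hS
  have hrb : r ≠ b := by rintro rfl; exact hmono r hcut
  by_contra! hno
  have hsmall := fun x (hx : x ∈ S) =>
    part_small hs hg IH hm hcard hno hrb hcut (hmono r) (hmono b) hx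
  have hmr := hm r
  have hmb := hm b
  have hM : ∀ x y z, Third c S r b x y → Third c S r b x z → y = z := by
    intro x y z hxy hxz
    by_contra hyz
    have hsub : {x, y, z} ⊆ part c S r b x := by
      simp [Finset.insert_subset_iff, self_mem_part hxy.1, third_mem_part hxy, third_mem_part hxz]
    have := Finset.card_le_card hsub
    rw [Finset.card_eq_three.2 ⟨x, y, z, hxy.2.2.1, hxz.2.2.1, hyz, rfl⟩] at this
    have := hsmall x hxy.1
    omega
  have hT : ∀ x y, Third c S r b x y → m r = 3 ∨ m b = 3 := by
    intro x y hxy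
    have hsub : {x, y} ⊆ part c S r b x := by
      simp [Finset.insert_subset_iff, self_mem_part hxy.1, third_mem_part hxy]
    have := Finset.card_le_card hsub
    rw [Finset.card_pair hxy.2.2.1] at this
    have := hsmall x hxy.1
    omega
  have h2 : 2 ≤ m r ∨ 2 ≤ m b := by
    obtain ⟨x, hx⟩ : S.Nonempty := by rw [← Finset.card_pos]; omega
    have := Finset.card_pos.2 ⟨x, self_mem_part (c := c) (r := r) (b := b) hx⟩
    have := hsmall x hx
    omega
  have hsw : ∀ x y, Third c S b r x y → Third c S r b x y :=
    fun x y ⟨h1, h2, h3, h4, h5⟩ => ⟨h1, h2, h3, h5, h4⟩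
  obtain ⟨j, hj⟩ : ∃ j, MonoPath c S j (2 * m j + 2) := by
    rcases le_total (m b) (m r) with hle | hle
    · exact of_matching hs hg IH hm hcard hrb hcut (hmono r) hM (by omega)
        (fun x y hxy => by have := hT x y hxy; omega) hle
    · obtain ⟨K, hK, hK1, hK2, hc⟩ := hcut
      exact of_matching hs hg IH hm hcard hrb.symm
        ⟨K, hK, hK1, hK2, fun x hx y hy => (hc x hx y hy).symm⟩ (hmono b)
        (fun x y z h h' => hM x y z (hsw x y h) (hsw x z h')) (by omega)
        (fun x y hxy => by have := hT x y (hsw x y hxy); omega) hle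
  exact hno j hj

end

/-! ### The lower bound -/

/-- The vertex labels of the extremal coloring: the first seven vertices have label `0`, and then
each of the labels `1, 2, …` is given to three consecutive vertices. -/
def label (i : ℕ) : ℕ := if i < 7 then 0 else (i - 7) / 3 + 1

lemma exists_coloring {k N : ℕ} (hk : 1 ≤ k) (hN : N ≤ 3 * k + 4) :
    ∃ c : Sym2 (Fin N) → Fin k, ∀ x y, (c s(x, y) : ℕ) = max (label x) (label y) := by
  have hlt : ∀ x : Fin N, label x < k := by
    intro x
    have := x.2
    unfold label
    split_ifs <;> omega
  exact ⟨Sym2.lift ⟨fun x y => ⟨max (label x) (label y), max_lt (hlt x) (hlt y)⟩,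
    fun x y => by simp [max_comm]⟩, fun x y => rfl⟩

/-- Color `0` only lives on seven vertices, and a color `i ≥ 1` only on edges meeting the three
vertices of label `i`, while `P₈` has four disjoint edges. -/
lemma lower {k N : ℕ} (hk : 1 ≤ k) (hN : N ≤ 3 * k + 4) :
    ¬ GallaiRamseyProp
      (fun _ : Fin k => (⟨8, SimpleGraph.pathGraph 8⟩ : Σ V : ℕ, SimpleGraph (Fin V))) N := by
  intro h
  obtain ⟨c, hc⟩ := exists_coloring hk hN
  obtain ⟨i, f, hf, hadj⟩ := h c (by
    intro x y z _ _ _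
    simp only [Fin.ext_iff, hc]
    omega)
  have hedge : ∀ u v : Fin 8, (u : ℕ) + 1 = v → max (label (f u)) (label (f v)) = i := by
    intro u v huv
    rw [← hc, hadj u v (by rw [SimpleGraph.pathGraph_adj]; exact Or.inl huv)]
  have hne : ∀ u v : Fin 8, u ≠ v → (f u : ℕ) ≠ f v := fun u v huv h => huv (hf (Fin.ext h))
  rcases Nat.eq_zero_or_pos (i : ℕ) with hi | hi
  · have hlt : ∀ u : Fin 8, (f u : ℕ) < 7 := by
      have hlab : ∀ x, label x = 0 → x < 7 := by
        intro x hx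
        unfold label at hx
        split_ifs at hx
        omega
      intro u
      refine hlab _ ?_
      by_cases hu : (u : ℕ) < 7
      · have := hedge u ⟨u + 1, by omega⟩ rfl
        omega
      · have := hedge ⟨6, by omega⟩ u (by have := u.2; simp; omega)
        omega
    have := Fintype.card_le_of_injective (fun u : Fin 8 => (⟨f u, hlt u⟩ : Fin 7))
      (fun u v huv => hf (Fin.ext (by simpa using huv)))
    simp at this
  · have hlab : ∀ x, label x = i → x = 3 * i + 4 ∨ x = 3 * i + 5 ∨ x = 3 * i + 6 := by
      intro x hx
      unfold label at hx
      split_ifs at hx <;> omega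
    have hend : ∀ u v : Fin 8, (u : ℕ) + 1 = v → ∃ w, (w = u ∨ w = v) ∧
        ((f w : ℕ) = 3 * i + 4 ∨ (f w : ℕ) = 3 * i + 5 ∨ (f w : ℕ) = 3 * i + 6) := by
      intro u v huv
      rcases max_choice (label (f u)) (label (f v)) with h | h
      · exact ⟨u, Or.inl rfl, hlab _ (h ▸ hedge u v huv)⟩
      · exact ⟨v, Or.inr rfl, hlab _ (h ▸ hedge u v huv)⟩
    obtain ⟨w₁, h₁, h₁'⟩ := hend 0 1 rfl
    obtain ⟨w₂, h₂, h₂'⟩ := hend 2 3 rfl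
    obtain ⟨w₃, h₃, h₃'⟩ := hend 4 5 rfl
    obtain ⟨w₄, h₄, h₄'⟩ := hend 6 7 rfl
    have n12 := hne w₁ w₂ (by rcases h₁ with rfl | rfl <;> rcases h₂ with rfl | rfl <;> decide)
    have n13 := hne w₁ w₃ (by rcases h₁ with rfl | rfl <;> rcases h₃ with rfl | rfl <;> decide)
    have n14 := hne w₁ w₄ (by rcases h₁ with rfl | rfl <;> rcases h₄ with rfl | rfl <;> decide)
    have n23 := hne w₂ w₃ (by rcases h₂ with rfl | rfl <;> rcases h₃ with rfl | rfl <;> decide)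
    have n24 := hne w₂ w₄ (by rcases h₂ with rfl | rfl <;> rcases h₄ with rfl | rfl <;> decide)
    have n34 := hne w₃ w₄ (by rcases h₃ with rfl | rfl <;> rcases h₄ with rfl | rfl <;> decide)
    omega

/-! ### The theorem -/

/-- GR_k(P₈) = 3k + 5. -/
theorem stmt_8 (k : ℕ) (hk : 1 ≤ k) :
    IsLeast {N | 0 < N ∧
      GallaiRamseyProp (fun _ : Fin k => (⟨8, SimpleGraph.pathGraph 8⟩ : Σ V : ℕ, SimpleGraph (Fin V))) N} (3 * k + 5) := by
  refine ⟨⟨by omega, fun c hc => ?_⟩, fun N hN => ?_⟩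
  · have : Nonempty (Fin k) := ⟨⟨0, hk⟩⟩
    obtain ⟨j, l, hlen, hn, -, hch⟩ :=
      forces (c := fun x y => c s(x, y)) (fun x y => by rw [Sym2.eq_swap]) hc (fun _ => 3)
        Finset.univ (fun _ => le_rfl) (fun _ => by simp; omega)
    have hlen : l.length = 8 := hlen
    have hstep : ∀ a d : Fin 8, (a : ℕ) + 1 = d →
        c s(l.get (a.cast hlen.symm), l.get (d.cast hlen.symm)) = j := by
      intro a d had
      have := List.isChain_iff_getElem.1 hch a (by omega)
      simpa [had] using this
    refine ⟨j, fun a => l.get (a.cast hlen.symm), ?_, fun a d had => ?_⟩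
    · intro a d had
      simpa using hn.injective_get had
    · rw [SimpleGraph.pathGraph_adj] at had
      rcases had with h | h
      · exact hstep a d h
      · rw [Sym2.eq_swap]
        exact hstep d a h
  · by_contra! hlt
    exact lower hk (by omega) hN.2
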